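/- For every λ ∈ ℂ with 0 < Im λ < ρ and every measurable f : (0,∞) → ℂ with ∫₀^∞ |f(s)| Δ(s) ds < ∞, one has ∫₀^∞ |T_λf(t)| Δ(t) dt < ∞, i.e. T_λf is integrable with respect to the measure Δ(t) dt on (0,∞). -/

import Mathlib

open Complex MeasureTheory Set

noncomputable section

/-- Gauss hypergeometric function ₂F₁ as a power series sum. -/
def hyp (a b c x : ℂ) : ℂ :=
  ∑' n : ℕ, (ascPochhammer ℂ n).eval a * (ascPochhammer ℂ n).eval b /
    ((ascPochhammer ℂ n).eval c * (n.factorial : ℂ)) * x ^ n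

/-- ρ = (m₁ + 2 m₂)/2 -/
def rho (m₁ m₂ : ℕ) : ℝ := ((m₁ : ℝ) + 2 * m₂) / 2

/-- Δ(t) = (2 sinh t)^(m₁+m₂) (2 cosh t)^(m₂) -/
def Del (m₁ m₂ : ℕ) (t : ℝ) : ℝ :=
  (2 * Real.sinh t) ^ (m₁ + m₂) * (2 * Real.cosh t) ^ m₂

/-- The solution Φ_λ. -/
def Phi (m₁ m₂ : ℕ) (l : ℂ) (t : ℝ) : ℂ :=
  ((2 * Real.cosh t : ℝ) : ℂ) ^ (Complex.I * l - (rho m₁ m₂ : ℂ)) *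
    hyp (((rho m₁ m₂ : ℂ) - Complex.I * l) / 2) (((m₁ : ℂ) + 2) / 4 - Complex.I * l / 2)
      (1 - Complex.I * l) ((((Real.cosh t) ^ 2 : ℝ) : ℂ))⁻¹

/-- The function b_λ. -/
def bfun (m₁ m₂ : ℕ) (l : ℂ) (t : ℝ) : ℂ :=
  (2 : ℂ) ^ (-(rho m₁ m₂ : ℂ) - 1 - Complex.I * l) *
    (Complex.Gamma (((rho m₁ m₂ : ℂ) - Complex.I * l) / 2) *
      Complex.Gamma (((m₁ : ℂ) + 2) / 4 - Complex.I * l / 2) /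
      (Complex.Gamma (((m₁ : ℂ) + (m₂ : ℂ) + 1) / 2) * Complex.Gamma (1 - Complex.I * l))) *
    Phi m₁ m₂ l t

/-- The elementary spherical function φ_λ. -/
def sph (m₁ m₂ : ℕ) (l : ℂ) (t : ℝ) : ℂ :=
  ((Real.cosh t : ℝ) : ℂ) ^ (-((rho m₁ m₂ : ℂ) + Complex.I * l)) *
    hyp (((m₁ : ℂ) + 2) / 4 + Complex.I * l / 2) (((rho m₁ m₂ : ℂ) + Complex.I * l) / 2)
      (((m₁ : ℂ) + (m₂ : ℂ) + 1) / 2) (((Real.tanh t) ^ 2 : ℝ) : ℂ)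

/-- The operator T_λ. -/
def Tfun (m₁ m₂ : ℕ) (l : ℂ) (f : ℝ → ℂ) (t : ℝ) : ℂ :=
  bfun m₁ m₂ l t * (∫ s in Set.Ioi t, f s * sph m₁ m₂ l s * (Del m₁ m₂ s : ℂ)) -
    sph m₁ m₂ l t * (∫ s in Set.Ioi t, f s * bfun m₁ m₂ l s * (Del m₁ m₂ s : ℂ))

/-!
`Δ T_λ f` is a difference of two functions `t ↦ p(t) ∫_{s > t} F(s) q(s) ds` with `F = f Δ`, which
is integrable, so by Fubini it is enough that `|q(s)| ∫_{t < s} |p(t)| dt` is bounded. Here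
`(p, q)` is `(b_λ Δ, φ_λ)` or `(φ_λ Δ, b_λ)`. With
`η = Im λ`, one has `φ_λ = O(cosh ^ (-(ρ - η)))` and
`b_λ = O(tanh ^ (-(m₁ + m₂)) cosh ^ (-(ρ + η)))`, while `Δ` is a multiple of
`tanh ^ (m₁ + m₂) cosh ^ (2ρ)`. In both cases, thus, `p = O(w)` and
`q = O(1 / w)` for a weight `w = tanh ^ σ cosh ^ α` with `σ ≥ 0` and `α = ρ ± η > 0`; this suffices
because `∫_0^s w = O(w(s))`.

The bounds on `φ_λ` and `b_λ` hold because the Taylor coefficients of `₂F₁(a, b; c; ·)` are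
`O(n ^ (Re (a + b - c) - 1))`, by Gauss's limit formula for `Γ`. When `Re (a + b - c) < 0` they are
summable; when `Re (a + b - c) ≤ σ` with `σ > 0` they are dominated by those of `(1 - x) ^ (-σ)`.
-/

open Asymptotics Filter Topology
open scoped Nat

/-! ### Hypergeometric series on the unit disc -/

lemma prod_range_add_natCast {R : Type*} [CommSemiring R] (s : R) (n : ℕ) :
    ∏ j ∈ Finset.range n, (s + j) = (ascPochhammer R n).eval s := by
  induction n with
  | zero => simp
  | succ n ih => rw [Finset.prod_range_succ, ih, ascPochhammer_succ_eval]

lemma isTheta_add_natCast (s : ℂ) : (fun n : ℕ => s + n) =Θ[atTop] fun n : ℕ => (n : ℝ) := by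
  have hlim : Tendsto (fun n : ℕ => ‖(n : ℂ)‖) atTop atTop := by
    simpa only [Complex.norm_natCast] using tendsto_natCast_atTop_atTop
  have hs : (fun _ : ℕ => s) =o[atTop] fun n : ℕ => (n : ℂ) :=
    isLittleO_const_left.2 (.inr hlim)
  exact hs.right_isTheta_add.symm.trans (.of_norm_eventuallyEq_norm (by simp))

lemma ascPochhammer_eval_eq_GammaSeq {s : ℂ} (hs : ∀ m : ℕ, s ≠ -m) {n : ℕ} (hn : n ≠ 0) :
    (ascPochhammer ℂ n).eval s = n ^ s * n ! / (GammaSeq s n * (s + n)) := by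
  have hpow : (n : ℂ) ^ s ≠ 0 := by simp [cpow_eq_zero_iff, hn]
  have hsn : s + n ≠ 0 := fun h => hs n (eq_neg_of_add_eq_zero_left h)
  have hpoch : (ascPochhammer ℂ n).eval s ≠ 0 := by
    rw [Ne, ascPochhammer_eval_eq_zero_iff]
    rintro ⟨k, -, hk⟩
    exact hs k (by rw [hk, neg_neg])
  have hfact : (n ! : ℂ) ≠ 0 := mod_cast n.factorial_ne_zero
  rw [GammaSeq, Finset.prod_range_succ, prod_range_add_natCast]
  field_simp

lemma isTheta_ascPochhammer_eval {s : ℂ} (hs : ∀ m : ℕ, s ≠ -m) :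
    (fun n => (ascPochhammer ℂ n).eval s) =Θ[atTop] fun n : ℕ => (n : ℝ) ^ (s.re - 1) * n ! := by
  have hGamma : GammaSeq s =Θ[atTop] fun _ => (1 : ℂ) :=
    (isTheta_of_div_tendsto_nhds_ne_zero (by simpa using GammaSeq_tendsto_Gamma s)
      (Gamma_ne_zero hs)).symm
  have hone : (fun _ : ℕ => (1 : ℂ)) =Θ[atTop] fun _ => (1 : ℝ) :=
    .of_norm_eventuallyEq_norm (by simp)
  have hpow : (fun n : ℕ => (n : ℂ) ^ s) =Θ[atTop] fun n : ℕ => (n : ℝ) ^ s.re :=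
    .of_norm_eventuallyEq <| (eventually_gt_atTop 0).mono fun n hn => norm_natCast_cpow_of_pos hn s
  have hfact : (fun n : ℕ => (n ! : ℂ)) =Θ[atTop] fun n : ℕ => (n ! : ℝ) :=
    .of_norm_eventuallyEq_norm (by simp)
  have h := (hpow.mul hfact).div ((hGamma.trans hone).mul (isTheta_add_natCast s))
  refine EventuallyEq.trans_isTheta ?_ (h.trans_eventuallyEq ?_)
  · filter_upwards [eventually_ne_atTop 0] with n hn using ascPochhammer_eval_eq_GammaSeq hs hn
  · filter_upwards [eventually_ne_atTop 0] with n hn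
    rw [Real.rpow_sub_one (Nat.cast_ne_zero.2 hn)]
    ring

lemma isBigO_ascPochhammer_eval (s : ℂ) :
    (fun n => (ascPochhammer ℂ n).eval s) =O[atTop] fun n : ℕ => (n : ℝ) ^ (s.re - 1) * n ! := by
  by_cases hs : ∀ m : ℕ, s ≠ -m
  · exact (isTheta_ascPochhammer_eval hs).isBigO
  · push Not at hs
    obtain ⟨m, rfl⟩ := hs
    exact EventuallyEq.trans_isBigO ((eventually_gt_atTop m).mono fun n hn =>
      ascPochhammer_eval_neg_coe_nat_of_lt hn) (isBigO_zero _ _)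

lemma ne_neg_natCast_of_re_pos {c : ℂ} (hc : 0 < c.re) (m : ℕ) : c ≠ -m := by
  rintro rfl
  simp only [neg_re, natCast_re, Left.neg_pos_iff] at hc
  exact hc.not_ge m.cast_nonneg

lemma isBigO_ordinaryHypergeometricCoefficient (a b : ℂ) {c : ℂ} (hc : ∀ m : ℕ, c ≠ -m) :
    ordinaryHypergeometricCoefficient a b c =O[atTop]
      fun n : ℕ => (n : ℝ) ^ ((a + b - c).re - 1) := by
  have hfact : (fun n : ℕ => (n ! : ℂ)⁻¹) =O[atTop] fun n : ℕ => (n ! : ℝ)⁻¹ :=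
    (IsTheta.of_norm_eventuallyEq_norm (by simp)).isBigO
  refine (((hfact.mul (isBigO_ascPochhammer_eval a)).mul (isBigO_ascPochhammer_eval b)).mul
    (isTheta_ascPochhammer_eval hc).inv.isBigO).trans_eventuallyEq ?_
  filter_upwards [eventually_gt_atTop 0] with n hn
  have hn' : (0 : ℝ) < n := mod_cast hn
  have hexp : (n : ℝ) ^ ((a + b - c).re - 1) =
      (n : ℝ) ^ (a.re - 1) * (n : ℝ) ^ (b.re - 1) / (n : ℝ) ^ (c.re - 1) := by
    rw [← Real.rpow_add hn', ← Real.rpow_sub hn']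
    congr 1
    simp only [sub_re, add_re]
    ring
  rw [hexp]
  field_simp

lemma isTheta_ascPochhammer_eval_div_factorial {σ : ℝ} (hσ : ∀ m : ℕ, σ ≠ -m) :
    (fun n => (ascPochhammer ℝ n).eval σ / n !) =Θ[atTop] fun n : ℕ => (n : ℝ) ^ (σ - 1) := by
  have hcast (n : ℕ) : (ascPochhammer ℂ n).eval (σ : ℂ) = ((ascPochhammer ℝ n).eval σ : ℝ) := by
    simp_rw [← prod_range_add_natCast]
    push_cast
    rfl
  have h : (fun n => (ascPochhammer ℝ n).eval σ) =Θ[atTop]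
      fun n : ℕ => (n : ℝ) ^ (σ - 1) * n ! :=
    IsTheta.trans (.of_norm_eventuallyEq_norm (.of_forall fun n => by simp only [hcast, norm_real]))
      (isTheta_ascPochhammer_eval (s := σ) fun m => mod_cast hσ m)
  refine (h.div (isTheta_refl (fun n : ℕ => (n ! : ℝ)) atTop)).trans_eventuallyEq
    (.of_forall fun n => ?_)
  exact mul_div_cancel_right₀ _ (Nat.cast_ne_zero.2 n.factorial_ne_zero)

lemma hasSum_ascPochhammer_div_factorial_mul_pow (σ : ℝ) {x : ℝ} (hx : |x| < 1) :
    HasSum (fun n => (ascPochhammer ℝ n).eval σ / n ! * x ^ n) ((1 - x) ^ (-σ)) := by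
  have h := (Real.one_div_one_sub_rpow_hasFPowerSeriesOnBall_zero σ).hasSum (y := x) (by
    simpa [Metric.mem_eball, edist_dist] using hx)
  rw [zero_add, one_div, ← Real.rpow_neg (by linarith [le_abs_self x])] at h
  refine h.congr_fun fun n => ?_
  rw [FormalMultilinearSeries.ofScalars_apply_eq, ← Ring.multichoose_eq, smul_eq_mul]
  rw [← Polynomial.ascPochhammer_smeval_eq_eval,
    ← Ring.factorial_nsmul_multichoose_eq_ascPochhammer, nsmul_eq_mul]
  field_simp

lemma one_le_radius_ordinaryHypergeometricSeries (a b c : ℂ) :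
    1 ≤ (ordinaryHypergeometricSeries ℂ a b c).radius := by
  by_cases h : ∀ k : ℕ, (k : ℂ) ≠ -a ∧ (k : ℂ) ≠ -b ∧ (k : ℂ) ≠ -c
  · exact (ordinaryHypergeometricSeries_radius_eq_one ℂ a b c h).ge
  · simp only [not_forall, not_and_or, not_not] at h
    have hneg {k : ℕ} {s : ℂ} (hk : (k : ℂ) = -s) : s = -k := by rw [hk, neg_neg]
    obtain ⟨k, hk | hk | hk⟩ := h <;> rw [hneg hk]
    · simp [ordinaryHypergeometric_radius_top_of_neg_nat₁]
    · simp [ordinaryHypergeometric_radius_top_of_neg_nat₂]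
    · simp [ordinaryHypergeometric_radius_top_of_neg_nat₃]

lemma continuousOn_ordinaryHypergeometric (a b c : ℂ) :
    ContinuousOn (₂F₁ a b c : ℂ → ℂ) (Metric.ball 0 1) := by
  have hrad := one_le_radius_ordinaryHypergeometricSeries a b c
  refine ((ordinaryHypergeometricSeries ℂ a b c).hasFPowerSeriesOnBall
    (zero_lt_one.trans_le hrad)).continuousOn.mono ?_
  rw [← Metric.eball_ofReal, ENNReal.ofReal_one]
  exact Metric.eball_subset_eball hrad

lemma isBigO_ordinaryHypergeometric_one {a b c : ℂ} (hc : ∀ m : ℕ, c ≠ -m)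
    (h : (a + b - c).re < 0) :
    (₂F₁ a b c : ℂ → ℂ) =O[𝓟 (Metric.closedBall 0 1)] fun _ => (1 : ℝ) := by
  have hsum : Summable fun n => ‖ordinaryHypergeometricCoefficient a b c n‖ :=
    summable_of_isBigO_nat (Real.summable_nat_rpow.2 (by linarith))
      (isBigO_ordinaryHypergeometricCoefficient a b hc).norm_left
  refine isBigO_principal.2 ⟨∑' n, ‖ordinaryHypergeometricCoefficient a b c n‖, fun z hz => ?_⟩
  rw [mem_closedBall_zero_iff] at hz
  rw [norm_one, mul_one, ordinaryHypergeometric_eq_tsum]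
  refine tsum_of_norm_bounded hsum.hasSum fun n => ?_
  rw [smul_eq_mul, norm_mul, norm_pow]
  exact mul_le_of_le_one_right (norm_nonneg _) (pow_le_one₀ (norm_nonneg z) hz)

lemma isBigO_ordinaryHypergeometric_one_sub_norm_rpow {a b c : ℂ} (hc : ∀ m : ℕ, c ≠ -m) {σ : ℝ}
    (hσ : 0 < σ) (h : (a + b - c).re ≤ σ) :
    (₂F₁ a b c : ℂ → ℂ) =O[𝓟 (Metric.ball 0 1)] fun z => (1 - ‖z‖) ^ (-σ) := by
  set u : ℕ → ℝ := fun n => (ascPochhammer ℝ n).eval σ / (n ! : ℝ)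
  have hu_pos (n : ℕ) : 0 < u n := div_pos (ascPochhammer_pos n σ hσ) (by positivity)
  have hcoeff : ordinaryHypergeometricCoefficient a b c =O[atTop] u := by
    have hΘ := isTheta_ascPochhammer_eval_div_factorial fun m =>
      ((neg_nonpos.2 m.cast_nonneg).trans_lt hσ).ne'
    refine ((isBigO_ordinaryHypergeometricCoefficient a b hc).trans
      (.of_norm_eventuallyLE ?_)).trans hΘ.symm.isBigO
    filter_upwards [eventually_ge_atTop 1] with n hn
    rw [Real.norm_of_nonneg (by positivity)]
    exact Real.rpow_le_rpow_of_exponent_le (mod_cast hn) (by linarith)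
  obtain ⟨C, -, hC⟩ := bound_of_isBigO_nat_atTop hcoeff
  refine isBigO_principal.2 ⟨C, fun z hz => ?_⟩
  rw [mem_ball_zero_iff] at hz
  have hbin := hasSum_ascPochhammer_div_factorial_mul_pow σ (abs_norm z |>.trans_lt hz)
  rw [Real.norm_of_nonneg (Real.rpow_nonneg (by linarith) _), ordinaryHypergeometric_eq_tsum]
  refine tsum_of_norm_bounded (hbin.mul_left C) fun n => ?_
  rw [smul_eq_mul, norm_mul, norm_pow, ← mul_assoc]
  refine mul_le_mul_of_nonneg_right ?_ (pow_nonneg (norm_nonneg z) n)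
  simpa only [Real.norm_of_nonneg (hu_pos n).le] using hC (hu_pos n).ne'

lemma hyp_eq_ordinaryHypergeometric (a b c : ℂ) : hyp a b c = ₂F₁ a b c := by
  funext x
  rw [hyp, ordinaryHypergeometric_eq_tsum]
  refine tsum_congr fun n => ?_
  rw [smul_eq_mul]
  ring

lemma continuousOn_hyp (a b c : ℂ) : ContinuousOn (hyp a b c) (Metric.ball 0 1) :=
  hyp_eq_ordinaryHypergeometric a b c ▸ continuousOn_ordinaryHypergeometric a b c

/-! ### Volterra operators on `L¹` -/

section Schur

variable {X Y 𝕜 : Type*} [MeasurableSpace X] [MeasurableSpace Y] [RCLike 𝕜]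

lemma integrable_integral_mul_of_integral_norm_le {μ : Measure X} {ν : Measure Y} [SFinite μ]
    [SFinite ν] {K : X × Y → 𝕜} {F : Y → 𝕜} {C : ℝ} (hK : AEStronglyMeasurable K (μ.prod ν))
    (hF : Integrable F ν) (hKi : ∀ᵐ y ∂ν, Integrable (fun x => K (x, y)) μ)
    (hKC : ∀ᵐ y ∂ν, ∫ x, ‖K (x, y)‖ ∂μ ≤ C) :
    Integrable (fun x => ∫ y, F y * K (x, y) ∂ν) μ := by
  have hFK : AEStronglyMeasurable (fun z : X × Y => F z.2 * K z) (μ.prod ν) :=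
    hF.aestronglyMeasurable.comp_snd.mul hK
  refine Integrable.integral_prod_left ((integrable_prod_iff' hFK).2 ⟨?_, ?_⟩)
  · filter_upwards [hKi] with y hy using hy.const_mul (F y)
  · refine (hF.norm.mul_const C).mono' hFK.norm.prod_swap.integral_prod_right' ?_
    filter_upwards [hKC] with y hy
    have hnonneg : 0 ≤ ∫ x, ‖K (x, y)‖ ∂μ := integral_nonneg fun _ => norm_nonneg _
    simp only [norm_mul, norm_norm, integral_const_mul, Real.norm_of_nonneg hnonneg]
    exact mul_le_mul_of_nonneg_left hy (norm_nonneg _)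

lemma integrable_mul_setIntegral_Ioi [LinearOrder X] [TopologicalSpace X] [OrderClosedTopology X]
    [SecondCountableTopology X] [OpensMeasurableSpace X] {μ : Measure X} [SFinite μ]
    {p q F : X → 𝕜} {C : ℝ} (hp : AEStronglyMeasurable p μ) (hq : AEStronglyMeasurable q μ)
    (hF : Integrable F μ) (hpi : ∀ᵐ s ∂μ, IntegrableOn p (Iio s) μ)
    (hC : ∀ᵐ s ∂μ, (∫ t in Iio s, ‖p t‖ ∂μ) * ‖q s‖ ≤ C) :
    Integrable (fun t => p t * ∫ s in Ioi t, F s * q s ∂μ) μ := by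
  set K : X × X → 𝕜 := {z | z.1 < z.2}.indicator fun z => p z.1 * q z.2 with hKdef
  have hK : AEStronglyMeasurable K (μ.prod μ) :=
    (hp.comp_fst.mul hq.comp_snd).indicator (measurableSet_lt measurable_fst measurable_snd)
  have hKleft (s : X) : (fun t => K (t, s)) = (Iio s).indicator fun t => p t * q s := by
    ext t; simp [hKdef, indicator]
  have hKright (t : X) :
      (fun s => F s * K (t, s)) = (Ioi t).indicator fun s => p t * (F s * q s) := by
    ext s; simp [hKdef, indicator, mul_left_comm]
  refine (integrable_integral_mul_of_integral_norm_le hK hF (C := C) ?_ ?_).congr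
    (.of_forall fun t => ?_)
  · filter_upwards [hpi] with s hs
    rw [hKleft, integrable_indicator_iff measurableSet_Iio]
    exact hs.mul_const (q s)
  · filter_upwards [hC] with s hs
    calc ∫ t, ‖K (t, s)‖ ∂μ = ∫ t in Iio s, ‖p t * q s‖ ∂μ := by
          rw [← integral_indicator measurableSet_Iio]
          simp_rw [← norm_indicator_eq_indicator_norm, ← hKleft]
      _ = (∫ t in Iio s, ‖p t‖ ∂μ) * ‖q s‖ := by simp only [norm_mul, integral_mul_const]
      _ ≤ C := hs
  · simp only [hKright, integral_indicator measurableSet_Ioi, integral_const_mul]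

end Schur

/-! ### Weights on the half-line -/

lemma strictMono_tanh : StrictMono Real.tanh := fun s t hst =>
  (Real.strictMonoOn_artanh.lt_iff_lt ⟨Real.neg_one_lt_tanh s, Real.tanh_lt_one s⟩
    ⟨Real.neg_one_lt_tanh t, Real.tanh_lt_one t⟩).1 (by simpa only [Real.artanh_tanh] using hst)

lemma tanh_pos {t : ℝ} (ht : 0 < t) : 0 < Real.tanh t :=
  Real.tanh_zero ▸ strictMono_tanh ht

lemma one_sub_inv_cosh_sq (t : ℝ) : 1 - (Real.cosh t ^ 2)⁻¹ = Real.tanh t ^ 2 := by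
  have hcosh := (Real.cosh_pos t).ne'
  rw [Real.tanh_eq_sinh_div_cosh, div_pow, Real.sinh_sq]
  field_simp

lemma continuous_tanh : Continuous Real.tanh := by
  rw [funext Real.tanh_eq_sinh_div_cosh]
  exact Real.continuous_sinh.div Real.continuous_cosh fun t => (Real.cosh_pos t).ne'

lemma cosh_le_exp {t : ℝ} (ht : 0 ≤ t) : Real.cosh t ≤ Real.exp t := by
  rw [← Real.cosh_add_sinh]
  exact le_add_of_nonneg_right (Real.sinh_nonneg_iff.2 ht)

lemma exp_le_two_mul_cosh (t : ℝ) : Real.exp t ≤ 2 * Real.cosh t := by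
  rw [← Real.cosh_add_sinh, two_mul]
  exact add_le_add_right (Real.sinh_lt_cosh t).le _

/-- The weight `tanh ^ σ * cosh ^ α` on the half-line, which behaves like `t ^ σ` as `t → 0` and
like a multiple of `exp (α * t)` as `t → ∞`. The exponents are real so that the reciprocal of a
weight is again a weight. -/
def tanhCoshWeight (σ α t : ℝ) : ℝ := Real.tanh t ^ σ * Real.cosh t ^ α

lemma tanhCoshWeight_pos (σ α : ℝ) {t : ℝ} (ht : 0 < t) : 0 < tanhCoshWeight σ α t :=
  mul_pos (Real.rpow_pos_of_pos (tanh_pos ht) σ) (Real.rpow_pos_of_pos (Real.cosh_pos t) α)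

lemma norm_tanhCoshWeight (σ α : ℝ) {t : ℝ} (ht : 0 < t) :
    ‖tanhCoshWeight σ α t‖ = tanhCoshWeight σ α t :=
  Real.norm_of_nonneg (tanhCoshWeight_pos σ α ht).le

lemma tanhCoshWeight_mul (σ τ α β : ℝ) {t : ℝ} (ht : 0 < t) :
    tanhCoshWeight σ α t * tanhCoshWeight τ β t = tanhCoshWeight (σ + τ) (α + β) t := by
  rw [tanhCoshWeight, tanhCoshWeight, tanhCoshWeight, Real.rpow_add (tanh_pos ht),
    Real.rpow_add (Real.cosh_pos t)]
  ring

lemma continuous_tanhCoshWeight {σ : ℝ} (hσ : 0 ≤ σ) (α : ℝ) : Continuous (tanhCoshWeight σ α) :=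
  (continuous_tanh.rpow_const fun _ => .inr hσ).mul
    (Real.continuous_cosh.rpow_const fun t => .inl (Real.cosh_pos t).ne')

lemma integrableOn_Ioo_tanhCoshWeight {σ : ℝ} (hσ : 0 ≤ σ) (α s : ℝ) :
    IntegrableOn (tanhCoshWeight σ α) (Ioo 0 s) :=
  (continuous_tanhCoshWeight hσ α).integrableOn_Icc.mono_set Ioo_subset_Icc_self

lemma tanhCoshWeight_le_rpow_mul_exp {σ α s t : ℝ} (hσ : 0 ≤ σ) (hα : 0 ≤ α) (ht : 0 < t)
    (hts : t ≤ s) : tanhCoshWeight σ α t ≤ Real.tanh s ^ σ * Real.exp (α * t) := by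
  have hcosh : Real.cosh t ^ α ≤ Real.exp (α * t) := by
    rw [mul_comm, Real.exp_mul]
    exact Real.rpow_le_rpow (Real.cosh_pos t).le (cosh_le_exp ht.le) hα
  exact mul_le_mul (Real.rpow_le_rpow (tanh_pos ht).le (strictMono_tanh.monotone hts) hσ) hcosh
    (Real.rpow_nonneg (Real.cosh_pos t).le α)
    (Real.rpow_nonneg (tanh_pos (ht.trans_le hts)).le σ)

lemma setIntegral_Ioo_tanhCoshWeight_le {σ α s : ℝ} (hσ : 0 ≤ σ) (hα : 0 < α) (hs : 0 < s) :
    ∫ t in Ioo 0 s, tanhCoshWeight σ α t ≤ 2 ^ α / α * tanhCoshWeight σ α s := by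
  have hexp := integrableOn_exp_mul_Iic hα s
  have hsub : Ioo 0 s ⊆ Iic s := fun _ ht => ht.2.le
  have htanh : 0 ≤ Real.tanh s ^ σ := Real.rpow_nonneg (tanh_pos hs).le σ
  calc ∫ t in Ioo 0 s, tanhCoshWeight σ α t
      ≤ ∫ t in Ioo 0 s, Real.tanh s ^ σ * Real.exp (α * t) :=
        setIntegral_mono_on (integrableOn_Ioo_tanhCoshWeight hσ α s)
          ((hexp.mono_set hsub).const_mul _) measurableSet_Ioo fun t ht =>
            tanhCoshWeight_le_rpow_mul_exp hσ hα.le ht.1 ht.2.le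
    _ ≤ Real.tanh s ^ σ * ∫ t in Iic s, Real.exp (α * t) := by
        rw [integral_const_mul]
        exact mul_le_mul_of_nonneg_left (setIntegral_mono_set hexp
          (.of_forall fun t => (Real.exp_pos _).le) hsub.eventuallyLE) htanh
    _ = Real.tanh s ^ σ * (Real.exp s ^ α / α) := by
        rw [integral_exp_mul_Iic hα, mul_comm α, Real.exp_mul]
    _ ≤ Real.tanh s ^ σ * ((2 * Real.cosh s) ^ α / α) := by
        have := exp_le_two_mul_cosh s
        gcongr
    _ = 2 ^ α / α * tanhCoshWeight σ α s := by
        rw [tanhCoshWeight, Real.mul_rpow two_pos.le (Real.cosh_pos s).le]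
        ring

section IsBigO

variable {E : Type*} [NormedAddCommGroup E] {σ α : ℝ}

lemma integrableOn_Ioo_of_isBigO_tanhCoshWeight {p : ℝ → E} (hσ : 0 ≤ σ)
    (hp : AEStronglyMeasurable p (volume.restrict (Ioi 0)))
    (hpw : p =O[𝓟 (Ioi 0)] tanhCoshWeight σ α) (s : ℝ) : IntegrableOn p (Ioo 0 s) := by
  obtain ⟨C, hC⟩ := isBigO_principal.1 hpw
  refine ((integrableOn_Ioo_tanhCoshWeight hσ α s).norm.const_mul C).mono'
    (hp.mono_set Ioo_subset_Ioi_self) ?_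
  filter_upwards [ae_restrict_mem measurableSet_Ioo] with t ht using hC t ht.1

lemma isBigO_setIntegral_Ioo_norm_tanhCoshWeight {p : ℝ → E} (hσ : 0 ≤ σ) (hα : 0 < α)
    (hpw : p =O[𝓟 (Ioi 0)] tanhCoshWeight σ α) :
    (fun s => ∫ t in Ioo 0 s, ‖p t‖) =O[𝓟 (Ioi 0)] tanhCoshWeight σ α := by
  obtain ⟨C, hC, hpC⟩ := hpw.exists_nonneg
  rw [isBigOWith_principal] at hpC
  refine isBigO_principal.2 ⟨C * (2 ^ α / α), fun s hs => ?_⟩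
  rw [norm_tanhCoshWeight σ α hs, Real.norm_of_nonneg (integral_nonneg fun _ => norm_nonneg _)]
  calc ∫ t in Ioo 0 s, ‖p t‖ ≤ ∫ t in Ioo 0 s, C * tanhCoshWeight σ α t := by
        refine integral_mono_of_nonneg (.of_forall fun _ => norm_nonneg _)
          ((integrableOn_Ioo_tanhCoshWeight hσ α s).const_mul C) ?_
        filter_upwards [ae_restrict_mem measurableSet_Ioo] with t ht
        exact norm_tanhCoshWeight σ α ht.1 ▸ hpC t ht.1
    _ ≤ C * (2 ^ α / α) * tanhCoshWeight σ α s := by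
        rw [integral_const_mul, mul_assoc]
        exact mul_le_mul_of_nonneg_left (setIntegral_Ioo_tanhCoshWeight_le hσ hα hs) hC

lemma integrableOn_mul_setIntegral_Ioi_of_isBigO {𝕜 : Type*} [RCLike 𝕜] {p q F : ℝ → 𝕜}
    (hσ : 0 ≤ σ) (hα : 0 < α) (hp : AEStronglyMeasurable p (volume.restrict (Ioi 0)))
    (hq : AEStronglyMeasurable q (volume.restrict (Ioi 0))) (hF : IntegrableOn F (Ioi 0))
    (hpw : p =O[𝓟 (Ioi 0)] tanhCoshWeight σ α)
    (hqw : q =O[𝓟 (Ioi 0)] tanhCoshWeight (-σ) (-α)) :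
    IntegrableOn (fun t => p t * ∫ s in Ioi t, F s * q s) (Ioi 0) := by
  have hone : EqOn (fun s => tanhCoshWeight σ α s * tanhCoshWeight (-σ) (-α) s) 1 (Ioi 0) :=
    fun s hs => by
      beta_reduce
      rw [tanhCoshWeight_mul σ (-σ) α (-α) hs]
      simp [tanhCoshWeight]
  obtain ⟨C, hC⟩ := isBigO_principal.1 <|
    ((isBigO_setIntegral_Ioo_norm_tanhCoshWeight hσ hα hpw).mul hqw.norm_left).trans_eventuallyEq
      hone.eventuallyEq
  have hrestrict (s : ℝ) :
      (volume.restrict (Ioi 0)).restrict (Iio s) = volume.restrict (Ioo 0 s) := by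
    rw [Measure.restrict_restrict measurableSet_Iio, inter_comm, Ioi_inter_Iio]
  refine (integrable_mul_setIntegral_Ioi (C := C) hp hq hF (.of_forall fun s => ?_) ?_).congr ?_
  · rw [IntegrableOn, hrestrict]
    exact integrableOn_Ioo_of_isBigO_tanhCoshWeight hσ hp hpw s
  · filter_upwards [ae_restrict_mem measurableSet_Ioi] with s hs
    rw [hrestrict]
    simpa only [Pi.one_apply, norm_one, mul_one] using (Real.le_norm_self _).trans (hC s hs)
  · filter_upwards [ae_restrict_mem measurableSet_Ioi] with t ht
    rw [Measure.restrict_restrict measurableSet_Ioi, inter_eq_left.2 (Ioi_subset_Ioi ht.le)]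

end IsBigO

/-! ### The functions `φ_λ`, `b_λ` and `Δ` -/

section Jacobi

variable (m₁ m₂ : ℕ) {l : ℂ}

lemma continuous_Del : Continuous (Del m₁ m₂) := by
  unfold Del
  fun_prop

lemma Del_pos {t : ℝ} (ht : 0 < t) : 0 < Del m₁ m₂ t := by
  have := Real.sinh_pos_iff.2 ht
  have := Real.cosh_pos t
  unfold Del
  positivity

lemma Del_eq_tanhCoshWeight (t : ℝ) :
    Del m₁ m₂ t = 2 ^ (m₁ + 2 * m₂) * tanhCoshWeight (m₁ + m₂) (2 * rho m₁ m₂) t := by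
  have hsinh : Real.sinh t = Real.tanh t * Real.cosh t := by
    rw [Real.tanh_eq_sinh_div_cosh, div_mul_cancel₀ _ (Real.cosh_pos t).ne']
  have hrho : 2 * rho m₁ m₂ = ((m₁ + 2 * m₂ : ℕ) : ℝ) := by
    rw [rho]
    push_cast
    ring
  rw [tanhCoshWeight, hrho, ← Nat.cast_add, Real.rpow_natCast, Real.rpow_natCast, Del, hsinh]
  ring

lemma isBigO_ofReal_Del :
    (fun t => (Del m₁ m₂ t : ℂ)) =O[𝓟 (Ioi 0)] tanhCoshWeight (m₁ + m₂) (2 * rho m₁ m₂) := by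
  refine isBigO_principal.2 ⟨2 ^ (m₁ + 2 * m₂), fun t _ => ?_⟩
  rw [norm_real, Del_eq_tanhCoshWeight, norm_mul, norm_pow, Real.norm_ofNat]

lemma mapsTo_tanh_sq_ball :
    MapsTo (fun t : ℝ => ((Real.tanh t ^ 2 : ℝ) : ℂ)) univ (Metric.ball 0 1) := fun t _ => by
  rw [mem_ball_zero_iff, norm_real, Real.norm_of_nonneg (sq_nonneg _)]
  exact Real.tanh_sq_lt_one t

lemma mapsTo_inv_cosh_sq_ball :
    MapsTo (fun t : ℝ => ((Real.cosh t ^ 2 : ℝ) : ℂ)⁻¹) (Ioi 0) (Metric.ball 0 1) := fun t ht => by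
  rw [mem_ball_zero_iff, norm_inv, norm_real, Real.norm_of_nonneg (sq_nonneg _), ← sub_pos,
    one_sub_inv_cosh_sq]
  exact pow_pos (tanh_pos ht) 2

lemma continuous_sph (l : ℂ) : Continuous (sph m₁ m₂ l) := by
  have htanh : Continuous fun t => ((Real.tanh t ^ 2 : ℝ) : ℂ) :=
    continuous_ofReal.comp (continuous_tanh.pow 2)
  refine .mul ?_ ((continuousOn_hyp _ _ _).comp_continuous htanh
    fun t => mapsTo_tanh_sq_ball (mem_univ t))
  exact (continuous_ofReal.comp Real.continuous_cosh).cpow continuous_const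
    fun t => .inl (Real.cosh_pos t)

lemma continuousOn_Phi (l : ℂ) : ContinuousOn (Phi m₁ m₂ l) (Ioi 0) := by
  have hcosh (t : ℝ) := Real.cosh_pos t
  have hinv : Continuous fun t : ℝ => ((Real.cosh t ^ 2 : ℝ) : ℂ)⁻¹ :=
    (continuous_ofReal.comp (Real.continuous_cosh.pow 2)).inv₀
      fun t => ofReal_ne_zero.2 (pow_pos (hcosh t) 2).ne'
  refine .mul (Continuous.continuousOn ?_)
    ((continuousOn_hyp _ _ _).comp hinv.continuousOn mapsTo_inv_cosh_sq_ball)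
  exact (continuous_ofReal.comp (Real.continuous_cosh.const_mul 2)).cpow continuous_const
    fun t => .inl (mul_pos two_pos (hcosh t))

lemma continuousOn_bfun (l : ℂ) : ContinuousOn (bfun m₁ m₂ l) (Ioi 0) :=
  (continuousOn_Phi m₁ m₂ l).const_mul _

lemma isBigO_sph (hl : 0 < l.im) :
    sph m₁ m₂ l =O[𝓟 (Ioi 0)] tanhCoshWeight 0 (-(rho m₁ m₂ - l.im)) := by
  have hpow : (fun t => (Real.cosh t : ℂ) ^ (-(rho m₁ m₂ + I * l))) =Θ[𝓟 (Ioi 0)]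
      fun t => Real.cosh t ^ (-(rho m₁ m₂ - l.im)) := by
    refine .of_norm_eventuallyEq (.of_forall fun t => ?_)
    refine (norm_cpow_eq_rpow_re_of_pos (Real.cosh_pos t) _).trans ?_
    congr 1
    simp only [neg_re, add_re, ofReal_re, I_mul_re]
    ring
  have hparam : (m₁ + 2) / 4 + I * l / 2 + (rho m₁ m₂ + I * l) / 2 - ((m₁ : ℂ) + m₂ + 1) / 2 =
      I * l := by
    rw [rho]
    push_cast
    ring
  have hc : 0 < (((m₁ : ℂ) + m₂ + 1) / 2).re := by
    rw [show ((m₁ : ℂ) + m₂ + 1) / 2 = (((m₁ + m₂ + 1) / 2 : ℝ) : ℂ) by push_cast; rfl, ofReal_re]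
    positivity
  have hhyp := (isBigO_ordinaryHypergeometric_one (a := (m₁ + 2) / 4 + I * l / 2)
    (b := (rho m₁ m₂ + I * l) / 2) (c := (m₁ + m₂ + 1) / 2) (ne_neg_natCast_of_re_pos hc)
    (by simpa [hparam] using hl)).comp_tendsto (tendsto_principal_principal.2
      fun t (_ : t ∈ Ioi 0) => Metric.ball_subset_closedBall (mapsTo_tanh_sq_ball (mem_univ t)))
  refine (hpow.isBigO.mul hhyp).congr (fun t => ?_) fun t => ?_
  · rw [sph, hyp_eq_ordinaryHypergeometric]
    rfl
  · simp [tanhCoshWeight]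

lemma isBigO_Phi (hm : 0 < m₁ + m₂) (hl : -1 < l.im) :
    Phi m₁ m₂ l =O[𝓟 (Ioi 0)] tanhCoshWeight (-(m₁ + m₂)) (-(rho m₁ m₂ + l.im)) := by
  have hpow : (fun t => ((2 * Real.cosh t : ℝ) : ℂ) ^ (I * l - rho m₁ m₂)) =O[𝓟 (Ioi 0)]
      fun t => Real.cosh t ^ (-(rho m₁ m₂ + l.im)) := by
    refine isBigO_principal.2 ⟨2 ^ (-(rho m₁ m₂ + l.im)), fun t _ => le_of_eq ?_⟩
    have hcosh := Real.cosh_pos t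
    rw [norm_cpow_eq_rpow_re_of_pos (mul_pos two_pos hcosh), Real.norm_of_nonneg (by positivity),
      ← Real.mul_rpow two_pos.le hcosh.le]
    congr 1
    simp only [sub_re, ofReal_re, I_mul_re]
    ring
  have hparam : (rho m₁ m₂ - I * l) / 2 + ((m₁ + 2) / 4 - I * l / 2) - (1 - I * l) =
      (((m₁ + m₂ - 1) / 2 : ℝ) : ℂ) := by
    rw [rho]
    push_cast
    ring
  have hhyp := (isBigO_ordinaryHypergeometric_one_sub_norm_rpow (a := (rho m₁ m₂ - I * l) / 2)
    (b := (m₁ + 2) / 4 - I * l / 2) (c := 1 - I * l) (σ := (m₁ + m₂) / 2)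
    (ne_neg_natCast_of_re_pos (by simpa [neg_lt_iff_pos_add'] using hl)) (half_pos (mod_cast hm))
    (by rw [hparam, ofReal_re]; linarith)).comp_tendsto
      (tendsto_principal_principal.2 mapsTo_inv_cosh_sq_ball)
  refine ((hpow.mul hhyp).congr_left fun t => ?_).trans_eventuallyEq
    (EqOn.eventuallyEq fun t ht => ?_)
  · rw [Phi, hyp_eq_ordinaryHypergeometric]
    rfl
  · have htanh := tanh_pos ht
    simp only [Function.comp_apply, norm_inv, norm_real, tanhCoshWeight]
    rw [Real.norm_of_nonneg (sq_nonneg _), one_sub_inv_cosh_sq, ← Real.rpow_natCast,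
      ← Real.rpow_mul htanh.le, mul_comm]
    congr 2
    push_cast
    ring

lemma isBigO_bfun (hm : 0 < m₁ + m₂) (hl : -1 < l.im) :
    bfun m₁ m₂ l =O[𝓟 (Ioi 0)] tanhCoshWeight (-(m₁ + m₂)) (-(rho m₁ m₂ + l.im)) :=
  (isBigO_Phi m₁ m₂ hm hl).const_mul_left _

lemma add_pos_of_rho_pos {m₁ m₂ : ℕ} (h : 0 < rho m₁ m₂) : 0 < m₁ + m₂ := by
  by_contra! hm
  obtain ⟨rfl, rfl⟩ : m₁ = 0 ∧ m₂ = 0 := by omega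
  simp [rho] at h

lemma isBigO_mul_Del {g : ℝ → ℂ} {σ α : ℝ} (hg : g =O[𝓟 (Ioi 0)] tanhCoshWeight σ α) :
    (fun t => g t * Del m₁ m₂ t) =O[𝓟 (Ioi 0)]
      tanhCoshWeight (σ + (m₁ + m₂)) (α + 2 * rho m₁ m₂) :=
  (hg.mul (isBigO_ofReal_Del m₁ m₂)).trans_eventuallyEq
    (EqOn.eventuallyEq fun _ ht => tanhCoshWeight_mul _ _ _ _ ht)

end Jacobi

theorem stmt9_general (m₁ m₂ : ℕ) (l : ℂ) (hl₀ : 0 < l.im) (hl₁ : l.im < rho m₁ m₂) (f : ℝ → ℂ)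
    (hf : AEStronglyMeasurable f (volume.restrict (Ioi 0)))
    (hf₁ : IntegrableOn (fun s : ℝ => ‖f s‖ * Del m₁ m₂ s) (Ioi 0)) :
    IntegrableOn (fun t : ℝ => Tfun m₁ m₂ l f t * (Del m₁ m₂ t : ℂ)) (Ioi 0) := by
  have hDel := (continuous_ofReal.comp (continuous_Del m₁ m₂)).aestronglyMeasurable
    (μ := volume.restrict (Ioi 0))
  have hsph := (continuous_sph m₁ m₂ l).aestronglyMeasurable (μ := volume.restrict (Ioi 0))
  have hb := (continuousOn_bfun m₁ m₂ l).aestronglyMeasurable measurableSet_Ioi (μ := volume)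
  have hF : IntegrableOn (fun s => f s * Del m₁ m₂ s) (Ioi 0) := by
    refine hf₁.mono' (hf.mul hDel) ?_
    filter_upwards [ae_restrict_mem measurableSet_Ioi] with s hs
    rw [norm_mul, Complex.norm_of_nonneg (Del_pos m₁ m₂ hs).le]
  have hsphO := isBigO_sph m₁ m₂ hl₀
  have hbO := isBigO_bfun m₁ m₂ (add_pos_of_rho_pos (hl₀.trans hl₁)) (neg_one_lt_zero.trans hl₀)
  have h₁ := integrableOn_mul_setIntegral_Ioi_of_isBigO (σ := 0) (α := rho m₁ m₂ - l.im) le_rfl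
    (sub_pos.2 hl₁) (hb.mul hDel) hsph hF
    ((isBigO_mul_Del m₁ m₂ hbO).congr_right fun t => by ring_nf) (by simpa using hsphO)
  have h₂ := integrableOn_mul_setIntegral_Ioi_of_isBigO (σ := m₁ + m₂) (α := rho m₁ m₂ + l.im)
    (by positivity) (by linarith) (hsph.mul hDel) hb hF
    ((isBigO_mul_Del m₁ m₂ hsphO).congr_right fun t => by ring_nf) hbO
  refine (h₁.sub h₂).congr (.of_forall fun t => ?_)
  simp only [Tfun, Pi.sub_apply, Pi.mul_apply, Function.comp_apply, mul_right_comm (f _)]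
  ring

theorem stmt9 (m₁ m₂ : ℕ) (hm₁ : 1 ≤ m₁) (l : ℂ) (hl₀ : 0 < l.im) (hl₁ : l.im < rho m₁ m₂)
    (f : ℝ → ℂ) (hf : Measurable f)
    (hf₁ : IntegrableOn (fun s : ℝ => ‖f s‖ * Del m₁ m₂ s) (Set.Ioi 0)) :
    IntegrableOn (fun t : ℝ => Tfun m₁ m₂ l f t * (Del m₁ m₂ t : ℂ)) (Set.Ioi 0) :=
  stmt9_general m₁ m₂ l hl₀ hl₁ f hf.aestronglyMeasurable hf₁

end
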